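/- arXiv:2002.03585 — 3 statements merged into one kernel-verified Lean document; each statement's English description precedes it below -/
import Mathlib

section
/- Every deterministic episodic MDP is Optimal Policy Feed-Forward. Precisely: let a deterministic MDP be given, and define the optimal policy MDP graph as the relation E on S with E(s,s') iff s ≠ t and g(s,a) = s' for some a ∈ A*(s). If the MDP is episodic (every greedy-optimal policy π satisfies T(s,a,π) < ∞ for every pair (s,a)), then E has no directed cycles, i.e., there is no state s with (s,s) in the transitive closure of E. -/
/-- A deterministic MDP: finite states `S` with terminal state `t`, actions `A`,
deterministic transition function `g`, reward function `r`, and discount `γ ∈ (0,1]`.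
The terminal state is absorbing with zero reward. -/
structure DetMDP (S A : Type) where
  t : S
  g : S → A → S
  r : S → A → ℝ
  γ : ℝ
  γ_pos : 0 < γ
  γ_le_one : γ ≤ 1
  g_t : ∀ a, g t a = t
  r_t : ∀ a, r t a = 0

namespace DetMDP

variable {S A : Type}

/-- The trajectory of (state, action) pairs starting from `(s, a)` and thereafter
following policy `π`: `s_0 = s`, `a_0 = a`, `s_{u+1} = g s_u a_u`, `a_{u+1} = π s_{u+1}`. -/
def traj (M : DetMDP S A) (π : S → A) (s : S) (a : A) : ℕ → S × A
  | 0 => (s, a)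
  | u + 1 =>
    let p := traj M π s a u
    let s' := M.g p.1 p.2
    (s', π s')

/-- The trajectory from `(s,a)` under `π` eventually hits the terminal state. -/
def Terminates (M : DetMDP S A) (π : S → A) (s : S) (a : A) : Prop :=
  ∃ u, (M.traj π s a u).1 = M.t

/-- The hitting time `T(s,a,π)`: the least `u` with `s_u = t`
(junk value `0` when the trajectory never terminates). -/
noncomputable def hit (M : DetMDP S A) (π : S → A) (s : S) (a : A) : ℕ :=
  sInf {u | (M.traj π s a u).1 = M.t}

/-- The episodic return `G(s,a,π) = Σ_{u=0}^{T-1} γ^u r(s_u, a_u)`. -/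
noncomputable def ret (M : DetMDP S A) (π : S → A) (s : S) (a : A) : ℝ :=
  ∑ u ∈ Finset.range (M.hit π s a),
    M.γ ^ u * M.r (M.traj π s a u).1 (M.traj π s a u).2

/-- The optimal action-value function `Q*(s,a)`: the maximum of `G(s,a,π)` over the
(finitely many) policies `π` that terminate from `(s,a)`. -/
noncomputable def Qstar (M : DetMDP S A) (s : S) (a : A) : ℝ :=
  sSup {x | ∃ π : S → A, M.Terminates π s a ∧ M.ret π s a = x}

/-- The optimal value function `V*(s) = max_a Q*(s,a)`. -/
noncomputable def Vstar (M : DetMDP S A) (s : S) : ℝ :=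
  sSup {x | ∃ a : A, M.Qstar s a = x}

/-- The set of optimal actions `A*(s)`. -/
def Astar (M : DetMDP S A) (s : S) : Set A :=
  {a | M.Qstar s a = M.Vstar s}

/-- A policy is greedy-optimal if it selects an optimal action in every state. -/
def GreedyOpt (M : DetMDP S A) (π : S → A) : Prop :=
  ∀ s, π s ∈ M.Astar s

/-- The MDP is episodic: every greedy-optimal policy terminates from every start pair. -/
def Episodic (M : DetMDP S A) : Prop :=
  ∀ π : S → A, M.GreedyOpt π → ∀ s a, M.Terminates π s a

end DetMDP

/-- Every deterministic episodic MDP is Optimal Policy Feed-Forward: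
the optimal policy MDP graph — with an edge from `s` to `s'` iff `s ≠ t` and
`g s a = s'` for some optimal action `a ∈ A*(s)` — has no directed cycles. -/
theorem deterministic_episodic_is_OPFF
    {S A : Type} [Fintype S] [Fintype A] [Nonempty A]
    (M : DetMDP S A)
    (hterm : ∀ (s : S) (a : A), ∃ π : S → A, M.Terminates π s a)
    (heps : M.Episodic) :
    ¬ ∃ s : S, Relation.TransGen
      (fun s s' : S => s ≠ M.t ∧ ∃ a ∈ M.Astar s, M.g s a = s') s s := by
  rintro ⟨s₀, h₀⟩
  -- every state has an optimal action
  have hne : ∀ s, ∃ a, a ∈ M.Astar s := by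
    intro s
    have hfin : (Set.range (M.Qstar s)).Finite := Set.finite_range _
    have hmem := (Set.range_nonempty (M.Qstar s)).csSup_mem hfin
    obtain ⟨a, ha⟩ := hmem
    exact ⟨a, ha⟩
  -- in a state on a cycle, some optimal action leads to another state on a cycle
  have key : ∀ s, ∃ a, a ∈ M.Astar s ∧
      (Relation.TransGen (fun s s' : S => s ≠ M.t ∧ ∃ a ∈ M.Astar s, M.g s a = s') s s →
        s ≠ M.t ∧
        Relation.TransGen (fun s s' : S => s ≠ M.t ∧ ∃ a ∈ M.Astar s, M.g s a = s')
          (M.g s a) (M.g s a)) := by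
    intro s
    by_cases hs : Relation.TransGen
        (fun s s' : S => s ≠ M.t ∧ ∃ a ∈ M.Astar s, M.g s a = s') s s
    · obtain ⟨b, hsb, hbs⟩ := Relation.TransGen.head'_iff.1 hs
      obtain ⟨hst, a, ha, rfl⟩ := id hsb
      exact ⟨a, ha, fun _ => ⟨hst, Relation.TransGen.tail' hbs hsb⟩⟩
    · obtain ⟨a, ha⟩ := hne s
      exact ⟨a, ha, fun h => absurd h hs⟩
  choose π hπ hcyc using key
  obtain ⟨u, hu⟩ := heps π hπ s₀ (π s₀)
  have inv : ∀ u, (M.traj π s₀ (π s₀) u).2 = π (M.traj π s₀ (π s₀) u).1 ∧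
      Relation.TransGen (fun s s' : S => s ≠ M.t ∧ ∃ a ∈ M.Astar s, M.g s a = s')
        (M.traj π s₀ (π s₀) u).1 (M.traj π s₀ (π s₀) u).1 := by
    intro u
    induction u with
    | zero => exact ⟨rfl, h₀⟩
    | succ n ih =>
      refine ⟨rfl, ?_⟩
      have h := (hcyc _ ih.2).2
      rw [← ih.1] at h
      exact h
  exact (hcyc _ (inv u).2).1 hu
end

section
/- (Bellman optimality equation for deterministic episodic MDPs.) Let a deterministic MDP be given and assume it is episodic (every greedy-optimal policy π satisfies T(s,a,π) < ∞ for every pair (s,a)). Then V*(t) = 0, and for every state s ∈ S and every action a ∈ A: Q*(s,a) = r(s,a) + γ · V*(g(s,a)), where V*(s') = max_{a'∈A} Q*(s',a'). -/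
namespace DetMDP

theorem traj_shift {S A : Type} (M : DetMDP S A) (π : S → A) (s : S) (a : A) (u : ℕ) :
    M.traj π s a (u + 1) = M.traj π (M.g s a) (π (M.g s a)) u := by
  induction u with
  | zero => rfl
  | succ u ih =>
    rw [traj, ih]
    rfl

theorem hit_t {S A : Type} (M : DetMDP S A) (π : S → A) (a : A) : M.hit π M.t a = 0 := by
  have : (0 : ℕ) ∈ {u | (M.traj π M.t a u).1 = M.t} := rfl
  exact Nat.le_zero.mp (Nat.sInf_le this)

theorem ret_t {S A : Type} (M : DetMDP S A) (π : S → A) (a : A) : M.ret π M.t a = 0 := by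
  simp [ret, hit_t]

theorem term_t {S A : Type} (M : DetMDP S A) (π : S → A) (a : A) : M.Terminates π M.t a :=
  ⟨0, rfl⟩

theorem term_shift {S A : Type} (M : DetMDP S A) (π : S → A) (s : S) (a : A)
    (h : M.Terminates π s a) : M.Terminates π (M.g s a) (π (M.g s a)) := by
  obtain ⟨u, hu⟩ := h
  cases u with
  | zero =>
    have hs : s = M.t := hu
    subst hs
    rw [M.g_t]
    exact M.term_t _ _
  | succ u => exact ⟨u, by rw [← traj_shift]; exact hu⟩

theorem hit_shift {S A : Type} (M : DetMDP S A) (π : S → A) (s : S) (a : A)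
    (h : M.Terminates π s a) (hs : s ≠ M.t) :
    M.hit π s a = M.hit π (M.g s a) (π (M.g s a)) + 1 := by
  have h' := term_shift M π s a h
  have h1 : (M.traj π s a (M.hit π s a)).1 = M.t :=
    Nat.sInf_mem (s := {u | (M.traj π s a u).1 = M.t}) h
  have h2 : (M.traj π (M.g s a) (π (M.g s a)) (M.hit π (M.g s a) (π (M.g s a)))).1 = M.t :=
    Nat.sInf_mem (s := {u | (M.traj π (M.g s a) (π (M.g s a)) u).1 = M.t}) h'
  apply le_antisymm
  · apply Nat.sInf_le
    change (M.traj π s a _).1 = M.t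
    rw [traj_shift]
    exact h2
  · cases hk : M.hit π s a with
    | zero =>
      rw [hk] at h1
      exact absurd h1 hs
    | succ k =>
      rw [hk, traj_shift] at h1
      exact Nat.succ_le_succ (Nat.sInf_le h1)

theorem ret_shift {S A : Type} (M : DetMDP S A) (π : S → A) (s : S) (a : A)
    (h : M.Terminates π s a) :
    M.ret π s a = M.r s a + M.γ * M.ret π (M.g s a) (π (M.g s a)) := by
  by_cases hs : s = M.t
  · subst hs
    rw [M.g_t, ret_t, ret_t, M.r_t]
    simp
  · unfold ret
    rw [hit_shift M π s a h hs, Finset.sum_range_succ', Finset.mul_sum, add_comm]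
    congr 1
    · simp [traj]
    · refine Finset.sum_congr rfl fun u _ => ?_
      rw [traj_shift]
      ring

theorem ret_le_Q {S A : Type} [Finite S] [Finite A] (M : DetMDP S A) (π : S → A) (s : S) (a : A)
    (h : M.Terminates π s a) : M.ret π s a ≤ M.Qstar s a := by
  apply le_csSup
  · apply Set.Finite.bddAbove
    apply (Set.finite_range (fun π : S → A => M.ret π s a)).subset
    rintro x ⟨π, _, rfl⟩
    exact ⟨π, rfl⟩
  · exact ⟨π, h, rfl⟩

theorem Q_le_V {S A : Type} [Finite A] (M : DetMDP S A) (s : S) (a : A) :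
    M.Qstar s a ≤ M.Vstar s :=
  le_csSup (Set.finite_range (M.Qstar s)).bddAbove ⟨a, rfl⟩

theorem exists_greedy {S A : Type} [Finite A] [Nonempty A] (M : DetMDP S A) (s : S) :
    ∃ a, M.Qstar s a = M.Vstar s :=
  (Set.range_nonempty (M.Qstar s)).csSup_mem (Set.finite_range (M.Qstar s))

theorem Q_t {S A : Type} [Nonempty A] (M : DetMDP S A) (a : A) : M.Qstar M.t a = 0 := by
  have : {x | ∃ π : S → A, M.Terminates π M.t a ∧ M.ret π M.t a = x} = {0} := by
    ext x
    simp [ret_t, term_t, eq_comm]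
  rw [Qstar, this, csSup_singleton]

theorem V_t {S A : Type} [Finite A] [Nonempty A] (M : DetMDP S A) : M.Vstar M.t = 0 := by
  obtain ⟨a, ha⟩ := M.exists_greedy M.t
  rw [← ha, Q_t]

theorem Q_le {S A : Type} [Finite S] [Finite A] (M : DetMDP S A)
    (hterm : ∀ (s : S) (a : A), ∃ π : S → A, M.Terminates π s a) (s : S) (a : A) :
    M.Qstar s a ≤ M.r s a + M.γ * M.Vstar (M.g s a) := by
  apply csSup_le
  · obtain ⟨π, h⟩ := hterm s a
    exact ⟨_, π, h, rfl⟩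
  · rintro x ⟨π, h, rfl⟩
    rw [ret_shift M π s a h]
    have h1 := (M.ret_le_Q π _ _ (M.term_shift π s a h)).trans (M.Q_le_V _ _)
    have := mul_le_mul_of_nonneg_left h1 M.γ_pos.le
    linarith

theorem V_le_ret {S A : Type} [Finite S] [Finite A] [Nonempty A] (M : DetMDP S A)
    (hterm : ∀ (s : S) (a : A), ∃ π : S → A, M.Terminates π s a)
    (π : S → A) (hπ : M.GreedyOpt π) (u : ℕ) :
    ∀ s, (M.traj π s (π s) u).1 = M.t → M.Vstar s ≤ M.ret π s (π s) := by
  induction u with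
  | zero =>
    intro s hs
    have hs : s = M.t := hs
    subst hs
    rw [ret_t, V_t]
  | succ u ih =>
    intro s hs
    rw [ret_shift M π s _ ⟨_, hs⟩]
    rw [traj_shift] at hs
    have h1 := mul_le_mul_of_nonneg_left (ih _ hs) M.γ_pos.le
    have h2 := M.Q_le hterm s (π s)
    have h3 : M.Qstar s (π s) = M.Vstar s := hπ s
    linarith

end DetMDP

/-- Bellman optimality equation for deterministic episodic MDPs:
`V*(t) = 0` and `Q*(s,a) = r(s,a) + γ · V*(g(s,a))` for all `s, a`. -/
theorem bellman_optimality_deterministic_episodic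
    {S A : Type} [Fintype S] [Fintype A] [Nonempty A]
    (M : DetMDP S A)
    (hterm : ∀ (s : S) (a : A), ∃ π : S → A, M.Terminates π s a)
    (heps : M.Episodic) :
    M.Vstar M.t = 0 ∧
      ∀ (s : S) (a : A), M.Qstar s a = M.r s a + M.γ * M.Vstar (M.g s a) := by
  refine ⟨M.V_t, fun s a => le_antisymm (M.Q_le hterm s a) ?_⟩
  choose π hπ using M.exists_greedy
  have hg : M.GreedyOpt π := hπ
  have hT := heps π hg
  refine le_trans ?_ (M.ret_le_Q π s a (hT s a))
  rw [M.ret_shift π s a (hT s a)]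
  obtain ⟨u, hu⟩ := hT (M.g s a) (π (M.g s a))
  have h1 := mul_le_mul_of_nonneg_left (M.V_le_ret hterm π hg u _ hu) M.γ_pos.le
  linarith
end

section
/- (Mixture-of-sample-means bound from the proof of Theorem 2.) Let I be a nonempty finite index set, B ≥ 0, C ∈ ℝ, and for each i ∈ I let (G_i(l))_{l≥0} be a sequence of real numbers with |G_i(l)| ≤ B for all l. For each i ∈ I let L_i : ℕ → ℕ be nondecreasing, and set L(u) = Σ_{i∈I} L_i(u); assume L(u) → ∞ as u → ∞. Assume that for every i ∈ I such that L_i(u) → ∞, the sample means (1/n) Σ_{l=0}^{n−1} G_i(l) converge as n → ∞ to a limit c_i with c_i ≤ C. Then for every ε > 0 there exists U such that for all u ≥ U: (1/L(u)) Σ_{i∈I} Σ_{l=0}^{L_i(u)−1} G_i(l) ≤ C + ε; equivalently, limsup_{u→∞} (1/L(u)) Σ_{i∈I} Σ_{l=0}^{L_i(u)−1} G_i(l) ≤ C. -/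
open Filter

/-- Mixture-of-sample-means bound: if bounded sequences `G i` have
sample means converging to limits `≤ C` whenever their counts `L i u` tend to infinity,
the counts are nondecreasing, and the total count `L u = Σ_i L i u` tends to infinity,
then the overall running average is eventually `≤ C + ε` for every `ε > 0`. -/
theorem mixture_of_sample_means_bound
    {I : Type} [Fintype I] [Nonempty I]
    (B : ℝ) (hB : 0 ≤ B) (C : ℝ)
    (G : I → ℕ → ℝ) (hbdd : ∀ (i : I) (l : ℕ), |G i l| ≤ B)
    (L : I → ℕ → ℕ) (hmono : ∀ i : I, Monotone (L i))
    (htot : Tendsto (fun u : ℕ => ∑ i : I, L i u) atTop atTop)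
    (hconv : ∀ i : I, Tendsto (L i) atTop atTop →
      ∃ c : ℝ, c ≤ C ∧
        Tendsto (fun n : ℕ => (∑ l ∈ Finset.range n, G i l) / (n : ℝ))
          atTop (nhds c)) :
    ∀ ε > (0 : ℝ), ∃ U : ℕ, ∀ u ≥ U,
      (∑ i : I, ∑ l ∈ Finset.range (L i u), G i l) / ((∑ i : I, L i u : ℕ) : ℝ)
        ≤ C + ε := by
  intro ε hε
  have key : ∀ i : I, ∃ K : ℝ, ∀ᶠ u in atTop,
      ∑ l ∈ Finset.range (L i u), G i l ≤ (C + ε / 2) * (L i u : ℝ) + K := by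
    intro i
    by_cases h : Tendsto (L i) atTop atTop
    · obtain ⟨c, hc, ht⟩ := hconv i h
      refine ⟨0, ?_⟩
      have h1 := (ht.comp h).eventually_lt_const (show c < C + ε / 2 by linarith)
      filter_upwards [h1, h.eventually_ge_atTop 1] with u hu hu1
      have hpos : (0 : ℝ) < (L i u : ℝ) := by exact_mod_cast hu1
      simp only [Function.comp_apply] at hu
      rw [div_lt_iff₀ hpos] at hu
      linarith
    · have hM : ∃ M : ℕ, ∀ u, L i u < M := by
        by_contra hcon
        push Not at hcon
        exact h (tendsto_atTop_atTop_of_monotone (hmono i) hcon)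
      obtain ⟨M, hM⟩ := hM
      refine ⟨(B + |C + ε / 2|) * M, Eventually.of_forall fun u => ?_⟩
      have h1 : ∑ l ∈ Finset.range (L i u), G i l ≤ (L i u : ℝ) * B := by
        have := Finset.sum_le_card_nsmul (Finset.range (L i u)) (G i) B
          (fun l _ => (le_abs_self _).trans (hbdd i l))
        simpa using this
      have h2 : (L i u : ℝ) ≤ M := by exact_mod_cast (hM u).le
      have h3 : (0 : ℝ) ≤ L i u := Nat.cast_nonneg _
      have h4 : -|C + ε / 2| ≤ C + ε / 2 := neg_abs_le _
      have h5 : 0 ≤ |C + ε / 2| := abs_nonneg _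
      have h6 := mul_le_mul_of_nonneg_right h4 h3
      have h7 := mul_le_mul_of_nonneg_left h2 (add_nonneg hB h5)
      linarith
  choose K hK using key
  have hall := eventually_all.mpr hK
  obtain ⟨N, hN⟩ := exists_nat_ge ((∑ i, K i) / (ε / 2))
  obtain ⟨U, hU⟩ := eventually_atTop.mp
    (hall.and (htot.eventually_ge_atTop (N + 1)))
  refine ⟨U, fun u hu => ?_⟩
  obtain ⟨h1, h2⟩ := hU u hu
  have h3 : ((N : ℝ) + 1) ≤ ((∑ i : I, L i u : ℕ) : ℝ) := by exact_mod_cast h2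
  have h4 : (0 : ℝ) ≤ N := Nat.cast_nonneg _
  have h5 := Finset.sum_le_sum (fun i (_ : i ∈ Finset.univ) => h1 i)
  rw [Finset.sum_add_distrib, ← Finset.mul_sum, ← Nat.cast_sum] at h5
  rw [div_le_iff₀ (by linarith)]
  rw [div_le_iff₀ (by linarith)] at hN
  have h6 := mul_le_mul_of_nonneg_right h3 (show 0 ≤ ε / 2 by linarith)
  linarith
end
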